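/- Let 𝒫 ⊂ 𝒟 be a mutually absolutely continuous set of laws with Lebesgue density on ℝ^d. Then the closed fork-convex hull of the set of i.i.d. laws 𝒫^∞ contains every independent-product law ⨂{P_t} with all marginals P_t in 𝒫; that is, cl-f-conv(𝒫^∞) ⊇ ⨂𝒫 ⊇ 𝒫^∞. -/

import Mathlib

open MeasureTheory ProbabilityTheory Filter Finset Matrix
open scoped Classical

noncomputable section

namespace SeqTest

/-- `ℝ^d`. -/
abbrev RV (d : ℕ) := Fin d → ℝ

/-- The sequence space `Ω = (ℝ^d)^ℕ`. -/
abbrev Seq (d : ℕ) := ℕ → RV d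

variable (d : ℕ)


/-- The first `t` coordinates of a sequence. -/
def prefixMap (t : ℕ) : Seq d → (Fin t → RV d) := fun ω s => ω s

/-- The law of the first `t` coordinates under a sequential law `μ`. -/
def prefixLaw (μ : Measure (Seq d)) (t : ℕ) : Measure (Fin t → RV d) :=
  μ.map (prefixMap d t)

/-- The natural filtration of the coordinate process: `ℱ t = σ(X_0, …, X_{t-1})`. -/
def F : Filtration ℕ (inferInstance : MeasurableSpace (Seq d)) where
  seq t := ⨆ s ∈ Finset.range t, MeasurableSpace.comap (fun ω : Seq d => ω s) inferInstance
  mono' := by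
    intro i j hij
    exact biSup_mono fun s hs => Finset.mem_range.mpr
      (lt_of_lt_of_le (Finset.mem_range.mp hs) hij)
  le' := by
    intro t
    refine iSup₂_le fun s _ => ?_
    exact measurable_iff_comap_le.mp (measurable_pi_apply s)

/-- Local absolute continuity of sequential laws: every prefix law of `μ` is
absolutely continuous w.r.t. the corresponding prefix law of `Γ`. -/
def LocAC (μ Γ : Measure (Seq d)) : Prop := ∀ t, prefixLaw d μ t ≪ prefixLaw d Γ t

/-- The density (likelihood-ratio) process `Z_t^μ = d(μ|_t)/d(Γ|_t)` evaluated along the path. -/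
def Z (μ Γ : Measure (Seq d)) (t : ℕ) (ω : Seq d) : ℝ :=
  ((prefixLaw d μ t).rnDeriv (prefixLaw d Γ t) (prefixMap d t ω)).toReal

/-- The standard Gaussian measure on `ℝ^d`. -/
def stdGaussian : Measure (RV d) := Measure.pi fun _ => gaussianReal 0 1

/-- `Γ` is the law of an i.i.d. sequence of standard Gaussians: characterized through its
finite-dimensional rectangle probabilities. -/
def IsGamma (Γ : Measure (Seq d)) : Prop :=
  IsProbabilityMeasure Γ ∧
    ∀ (t : ℕ) (A : Fin t → Set (RV d)), (∀ s, MeasurableSet (A s)) →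
      prefixLaw d Γ t (Set.univ.pi A) = ∏ s, stdGaussian d (A s)

/-- `M` is a nonnegative supermartingale for the sequential law `μ`
(w.r.t. the natural filtration). -/
def IsNSM (μ : Measure (Seq d)) (M : ℕ → Seq d → ℝ) : Prop :=
  (∀ t ω, 0 ≤ M t ω) ∧ Supermartingale M (F d) μ

/-- `M` is a nonnegative martingale for the sequential law `μ`. -/
def IsNM (μ : Measure (Seq d)) (M : ℕ → Seq d → ℝ) : Prop :=
  (∀ t ω, 0 ≤ M t ω) ∧ Martingale M (F d) μ


/-- `R` is the `(s,h)`-fork-convex combination of `P` with `Q` (relative to the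
reference law `Γ`), described through its density process. -/
def IsFCC (Γ P Q : Measure (Seq d)) (s : ℕ) (h : Seq d → ℝ) (R : Measure (Seq d)) : Prop :=
  IsProbabilityMeasure P ∧ IsProbabilityMeasure Q ∧ LocAC d P Γ ∧ LocAC d Q Γ ∧
  Measurable[F d s] h ∧ (∀ ω, h ω ∈ Set.Icc (0 : ℝ) 1) ∧
  Γ {ω | h ω < 1 ∧ Z d Q Γ s ω = 0} = 0 ∧
  IsProbabilityMeasure R ∧ LocAC d R Γ ∧
  ∀ t : ℕ, (fun ω => Z d R Γ t ω) =ᵐ[Γ]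
    (fun ω => if t ≤ s then Z d P Γ t ω
      else h ω * Z d P Γ t ω + (1 - h ω) * Z d Q Γ t ω * (Z d P Γ s ω / Z d Q Γ s ω))

/-- A set of sequential laws is fork-convex if it is closed under fork-convex combinations. -/
def IsForkConvex (Γ : Measure (Seq d)) (S : Set (Measure (Seq d))) : Prop :=
  ∀ P ∈ S, ∀ Q ∈ S, ∀ (s : ℕ) (h : Seq d → ℝ) (R : Measure (Seq d)),
    IsFCC d Γ P Q s h R → R ∈ S

/-- The fork-convex hull: the smallest fork-convex set containing `𝔓`. -/
def fconv (Γ : Measure (Seq d)) (𝔓 : Set (Measure (Seq d))) : Set (Measure (Seq d)) :=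
  ⋂₀ {S | 𝔓 ⊆ S ∧ IsForkConvex d Γ S}

/-- Convergence of sequential laws: the density processes converge in `L¹(Γ)` at every fixed time. -/
def TendstoLocL1 (Γ : Measure (Seq d)) (Pn : ℕ → Measure (Seq d)) (P : Measure (Seq d)) : Prop :=
  ∀ t, Tendsto (fun n => ∫ ω, |Z d (Pn n) Γ t ω - Z d P Γ t ω| ∂Γ) atTop (nhds 0)

/-- The closed fork-convex hull: the closure of the fork-convex hull under local `L¹(Γ)`
convergence of density processes. -/
def clfconv (Γ : Measure (Seq d)) (𝔓 : Set (Measure (Seq d))) : Set (Measure (Seq d)) :=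
  {P | IsProbabilityMeasure P ∧ LocAC d P Γ ∧
    ∃ Pn : ℕ → Measure (Seq d), (∀ n, Pn n ∈ fconv d Γ 𝔓) ∧ TendstoLocL1 d Γ Pn P}

/-- `μ` is the law of an i.i.d. sequence with marginal `P`. -/
def IsIIDLaw (μ : Measure (Seq d)) (P : Measure (RV d)) : Prop :=
  IsProbabilityMeasure μ ∧
    ∀ (t : ℕ) (A : Fin t → Set (RV d)), (∀ s, MeasurableSet (A s)) →
      prefixLaw d μ t (Set.univ.pi A) = ∏ s, P (A s)

/-- `μ` is the law of an independent sequence with marginals `Ps 0, Ps 1, …`. -/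
def IsProductLaw (μ : Measure (Seq d)) (Ps : ℕ → Measure (RV d)) : Prop :=
  IsProbabilityMeasure μ ∧
    ∀ (t : ℕ) (A : Fin t → Set (RV d)), (∀ s, MeasurableSet (A s)) →
      prefixLaw d μ t (Set.univ.pi A) = ∏ s : Fin t, Ps s (A s)

/-- The set of i.i.d. sequential laws with marginals in `PP`. -/
def iidLaws (PP : Set (Measure (RV d))) : Set (Measure (Seq d)) :=
  {μ | ∃ P ∈ PP, IsIIDLaw d μ P}

/-- The set of independent-product sequential laws with all marginals in `PP`. -/
def productLaws (PP : Set (Measure (RV d))) : Set (Measure (Seq d)) :=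
  {μ | ∃ Ps : ℕ → Measure (RV d), (∀ t, Ps t ∈ PP) ∧ IsProductLaw d μ Ps}




/-- The density of the `d`-dimensional Gaussian with mean `m` and covariance matrix `S`. -/
def gaussDensityFn (m : RV d) (S : Matrix (Fin d) (Fin d) ℝ) (x : RV d) : ℝ :=
  (2 * Real.pi) ^ (-(d : ℝ) / 2) * S.det ^ (-(1 : ℝ) / 2) *
    Real.exp (-(1 / 2) * ((x - m) ⬝ᵥ (S⁻¹ *ᵥ (x - m))))

/-- A finite mixture of nondegenerate Gaussian densities. -/
def IsGaussianMixture (g : RV d → ℝ) : Prop :=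
  ∃ (k : ℕ) (α : Fin k → ℝ) (ms : Fin k → RV d) (Ss : Fin k → Matrix (Fin d) (Fin d) ℝ),
    (∀ i, 0 ≤ α i) ∧ (∑ i, α i = 1) ∧ (∀ i, (Ss i).PosDef) ∧
    g = fun x => ∑ i, α i * gaussDensityFn d (ms i) (Ss i) x

/-- A log-concave nonnegative function on `ℝ^d`. -/
def IsLogConcaveFn (p : RV d → ℝ) : Prop :=
  (∀ x, 0 ≤ p x) ∧
    ∀ (x y : RV d) (l : ℝ), 0 ≤ l → l ≤ 1 →
      p x ^ l * p y ^ (1 - l) ≤ p (l • x + (1 - l) • y)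

/-- A log-concave probability density on `ℝ^d`. -/
def IsLogConcaveDensity (p : RV d → ℝ) : Prop :=
  Measurable p ∧ IsLogConcaveFn d p ∧ ∫ x, p x = 1

/-- The set `𝓛` of laws on `ℝ^d` with a log-concave Lebesgue density. -/
def logConcaveLaws : Set (Measure (RV d)) :=
  {P | IsProbabilityMeasure P ∧ ∃ p : RV d → ℝ, Measurable p ∧ IsLogConcaveFn d p ∧
    P = volume.withDensity fun x => ENNReal.ofReal (p x)}

/-- The set `𝒢` of nondegenerate Gaussian laws on `ℝ^d`. -/
def gaussianLaws : Set (Measure (RV d)) :=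
  {P | ∃ (m : RV d) (S : Matrix (Fin d) (Fin d) ℝ), S.PosDef ∧
    P = volume.withDensity fun x => ENNReal.ofReal (gaussDensityFn d m S x)}

/-- An estimator sequence: a measurable family of (strictly positive) predictable
probability density estimates. -/
def IsEstimatorSeq (E : (t : ℕ) → (Fin t → RV d) → RV d → ℝ) : Prop :=
  (∀ t, Measurable fun q : (Fin t → RV d) × RV d => E t q.1 q.2) ∧
  (∀ t h x, 0 < E t h x) ∧ (∀ t h, ∫ x, E t h x = 1)

/-- The universal likelihood ratio (ULR) process. Time `t` corresponds to having observed
the `t` samples `ω 0, …, ω (t-1)`. -/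
def ULR (E : (t : ℕ) → (Fin t → RV d) → RV d → ℝ) (t : ℕ) (ω : Seq d) : ℝ :=
  if t ≤ d then 1 else
    (∏ j ∈ Finset.Ico d t, E j (fun i : Fin j => ω i) (ω j)) /
      ⨆ p : {p : RV d → ℝ // IsLogConcaveDensity d p}, ∏ j ∈ Finset.Ico d t, p.1 (ω j)

/-- The prediction (cumulative log-loss) regret of the estimator sequence `E` relative to
the density of `P`. -/
def regret (P : Measure (RV d)) (E : (t : ℕ) → (Fin t → RV d) → RV d → ℝ)
    (t : ℕ) (ω : Seq d) : ℝ :=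
  ∑ j ∈ Finset.range t,
    (Real.log ((P.rnDeriv volume (ω j)).toReal) - Real.log (E j (fun i : Fin j => ω i) (ω j)))

/-- The Hellinger distance between two laws on `ℝ^d` (via their Lebesgue densities). -/
def hellinger (P Q : Measure (RV d)) : ℝ :=
  Real.sqrt ((1 / 2) *
    ∫ x, (Real.sqrt ((P.rnDeriv volume x).toReal) - Real.sqrt ((Q.rnDeriv volume x).toReal)) ^ 2)

/-- The Hellinger distance from `P` to the class of log-concave laws. -/
def dHLC (P : Measure (RV d)) : ℝ :=
  sInf {r | ∃ L ∈ logConcaveLaws d, r = hellinger d P L}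

/-- The Kullback–Leibler divergence. -/
def klDivR {α : Type*} [MeasurableSpace α] (P Q : Measure α) : EReal :=
  if P ≪ Q ∧ Integrable (fun x => Real.log ((P.rnDeriv Q x).toReal)) P
  then ((∫ x, Real.log ((P.rnDeriv Q x).toReal) ∂P : ℝ) : EReal) else ⊤

/-- Membership in `𝒟₁`. -/
def MemD1 (P : Measure (RV d)) : Prop :=
  IsProbabilityMeasure P ∧ P ≪ volume ∧
  Integrable (fun x => max 0 (Real.log ((P.rnDeriv volume x).toReal))) P ∧
  Integrable (fun x => Real.sqrt (∑ i, (x i) ^ 2)) P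

/-- The log-likelihood gap `σ_t(P)` between the true density and the log-concave maximum
likelihood. -/
def sigmaT (P : Measure (RV d)) (t : ℕ) (ω : Seq d) : ℝ :=
  (∑ j ∈ Finset.range t, Real.log ((P.rnDeriv volume (ω j)).toReal)) -
    ⨆ p : {p : RV d → ℝ // IsLogConcaveDensity d p},
      ∑ j ∈ Finset.range t, Real.log (p.1 (ω j))

/-- The mean vector of `P`. -/
def meanVec (P : Measure (RV d)) : RV d := fun i => ∫ x, x i ∂P

/-- `Δ_P = min_{‖v‖=1} E_P |⟨v, X − E_P X⟩|`. -/
def DeltaP (P : Measure (RV d)) : ℝ :=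
  sInf {r | ∃ v : RV d, (∑ i, (v i) ^ 2) = 1 ∧
    r = ∫ x, |∑ i, v i * (x i - meanVec d P i)| ∂P}

/-- The class `𝒟_{Box,Lip,B}`: laws with a `1`-Lipschitz density supported on `[-1,1]^d`
taking values in `[1/B, B]` there. -/
def DBoxLip (B : ℝ) : Set (Measure (RV d)) :=
  {P | IsProbabilityMeasure P ∧ ∃ p : RV d → ℝ, Measurable p ∧
    P = volume.withDensity (fun x => ENNReal.ofReal (p x)) ∧
    (∀ x, ¬ (∀ i, |x i| ≤ 1) → p x = 0) ∧
    (∀ x, (∀ i, |x i| ≤ 1) → 1 / B ≤ p x ∧ p x ≤ B) ∧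
    (∀ x y, (∀ i, |x i| ≤ 1) → (∀ i, |y i| ≤ 1) →
      |p x - p y| ≤ Real.sqrt (∑ i, (x i - y i) ^ 2))}



/-!
The density process of a product law is the running product of its marginal densities. Hence
following one product law up to time `s` and another one afterwards is a fork-convex combination of
the two, provided the marginals of the first are absolutely continuous with respect to those of the
second: the quotient in the definition of the combination then only involves zeros that the first
density shares. Switching at times `1, …, n` between i.i.d. laws therefore puts
`P₀ ⊗ P₁ ⊗ ⋯ ⊗ Pₙ ⊗ Pₙ ⊗ ⋯` into the fork-convex hull, and this law has the same prefix law as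
`⨂ Pₜ` up to every time `t ≤ n`, so local `L¹` convergence is trivial.
-/

theorem prod_piecewise_eq_fork {ι K : Type*} [DecidableEq ι] [Field K] [DecidableEq K]
    {s t : Finset ι} (hst : s ⊆ t) {p q : ι → K} (hpq : ∀ i ∈ s, q i = 0 → p i = 0) :
    ∏ i ∈ t, s.piecewise p q i =
      (if ∏ i ∈ s, q i = 0 then 1 else 0) * ∏ i ∈ t, p i +
        (1 - if ∏ i ∈ s, q i = 0 then 1 else 0) * (∏ i ∈ t, q i) *
          ((∏ i ∈ s, p i) / ∏ i ∈ s, q i) := by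
  rw [prod_piecewise, inter_eq_right.mpr hst, ← prod_sdiff hst, ← prod_sdiff hst]
  split_ifs with hq
  · obtain ⟨i, his, hi⟩ := prod_eq_zero_iff.mp hq
    simp [prod_eq_zero his (hpq i his hi)]
  · field_simp
    ring

theorem indicator_univ_pi_prod_apply {ι M : Type*} [Fintype ι] {X : ι → Type*}
    [CommMonoidWithZero M] (A : ∀ i, Set (X i)) (f : ∀ i, X i → M) (x : ∀ i, X i) :
    (Set.univ.pi A).indicator (fun y => ∏ i, f i (y i)) x = ∏ i, (A i).indicator (f i) (x i) := by
  simp only [Set.indicator_apply, Set.mem_univ_pi, prod_ite_zero, mem_univ, forall_const]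

section PiMeasure

variable {ι : Type*} [Fintype ι] {X : ι → Type*} [∀ i, MeasurableSpace (X i)]

theorem lintegral_fin_prod_eq_prod {n : ℕ} {X : Fin n → Type*} [∀ i, MeasurableSpace (X i)]
    (μ : ∀ i, Measure (X i)) [∀ i, SigmaFinite (μ i)] {f : ∀ i, X i → ENNReal}
    (hf : ∀ i, Measurable (f i)) :
    ∫⁻ x, ∏ i, f i (x i) ∂Measure.pi μ = ∏ i, ∫⁻ x, f i x ∂μ i := by
  induction n with
  | zero => simp
  | succ n ih =>
    have htail : Measurable fun x : ∀ i : Fin n, X i.succ => ∏ i, f i.succ (x i) := by fun_prop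
    calc ∫⁻ x, ∏ i, f i (x i) ∂Measure.pi μ
        = ∫⁻ z : X 0 × (∀ i : Fin n, X i.succ), f 0 z.1 * ∏ i : Fin n, f i.succ (z.2 i)
            ∂(μ 0).prod (Measure.pi fun i : Fin n => μ i.succ) := by
          rw [← (measurePreserving_piFinSuccAbove μ 0).symm.lintegral_comp_emb
            (MeasurableEquiv.measurableEmbedding _)]
          refine lintegral_congr fun z => ?_
          rw [Fin.prod_univ_succ]
          rfl
      _ = (∫⁻ x, f 0 x ∂μ 0) * ∏ i : Fin n, ∫⁻ x, f i.succ x ∂μ i.succ := by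
          rw [lintegral_prod_mul (hf 0).aemeasurable htail.aemeasurable, ih _ fun i => hf i.succ]
      _ = ∏ i, ∫⁻ x, f i x ∂μ i := by rw [Fin.prod_univ_succ]

theorem lintegral_fintype_prod_eq_prod (μ : ∀ i, Measure (X i)) [∀ i, SigmaFinite (μ i)]
    {f : ∀ i, X i → ENNReal} (hf : ∀ i, Measurable (f i)) :
    ∫⁻ x, ∏ i, f i (x i) ∂Measure.pi μ = ∏ i, ∫⁻ x, f i x ∂μ i := by
  let e := (Fintype.equivFin ι).symm
  rw [← (measurePreserving_piCongrLeft μ e).lintegral_comp_emb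
    (MeasurableEquiv.measurableEmbedding _)]
  simp_rw [← e.prod_comp, MeasurableEquiv.coe_piCongrLeft, Equiv.piCongrLeft_apply_apply]
  exact lintegral_fin_prod_eq_prod _ fun i => hf (e i)

theorem pi_withDensity (ν : ∀ i, Measure (X i)) [∀ i, SigmaFinite (ν i)] {f : ∀ i, X i → ENNReal}
    (hf : ∀ i, Measurable (f i)) [∀ i, SigmaFinite ((ν i).withDensity (f i))] :
    Measure.pi (fun i => (ν i).withDensity (f i)) =
      (Measure.pi ν).withDensity fun x => ∏ i, f i (x i) := by
  refine Measure.pi_eq fun A hA => ?_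
  simp_rw [withDensity_apply _ (MeasurableSet.univ_pi hA), withDensity_apply _ (hA _),
    ← lintegral_indicator (MeasurableSet.univ_pi hA), ← lintegral_indicator (hA _),
    indicator_univ_pi_prod_apply]
  exact lintegral_fintype_prod_eq_prod ν fun i => (hf i).indicator (hA i)

variable {μ ν : ∀ i, Measure (X i)} [∀ i, SigmaFinite (μ i)] [∀ i, SigmaFinite (ν i)]

theorem pi_eq_withDensity_prod_rnDeriv (h : ∀ i, μ i ≪ ν i) :
    Measure.pi μ = (Measure.pi ν).withDensity fun x => ∏ i, (μ i).rnDeriv (ν i) (x i) := by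
  have hμ : ∀ i, (ν i).withDensity ((μ i).rnDeriv (ν i)) = μ i := fun i =>
    Measure.withDensity_rnDeriv_eq _ _ (h i)
  have : ∀ i, SigmaFinite ((ν i).withDensity ((μ i).rnDeriv (ν i))) := fun i => by
    rw [hμ]; infer_instance
  simp_rw [← pi_withDensity ν fun i => Measure.measurable_rnDeriv (μ i) (ν i), hμ]

theorem pi_absolutelyContinuous (h : ∀ i, μ i ≪ ν i) : Measure.pi μ ≪ Measure.pi ν := by
  rw [pi_eq_withDensity_prod_rnDeriv h]
  exact withDensity_absolutelyContinuous _ _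

theorem rnDeriv_pi (h : ∀ i, μ i ≪ ν i) :
    (Measure.pi μ).rnDeriv (Measure.pi ν) =ᵐ[Measure.pi ν]
      fun x => ∏ i, (μ i).rnDeriv (ν i) (x i) := by
  rw [pi_eq_withDensity_prod_rnDeriv h]
  exact Measure.rnDeriv_withDensity _ (by fun_prop)

end PiMeasure

theorem ae_rnDeriv_eq_zero_of_absolutelyContinuous {E : Type*} [MeasurableSpace E]
    {μ ν : Measure E} (γ : Measure E) [SigmaFinite μ] [SigmaFinite ν] [SigmaFinite γ]
    (hμν : μ ≪ ν) : ∀ᵐ x ∂γ, ν.rnDeriv γ x = 0 → μ.rnDeriv γ x = 0 := by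
  filter_upwards [Measure.rnDeriv_mul_rnDeriv (κ := γ) hμν] with x hchain hν
  rw [← hchain, Pi.mul_apply, hν, mul_zero]

theorem piecewise_absolutelyContinuous {ι E : Type*} [DecidableEq ι] [MeasurableSpace E]
    (s : Finset ι) {μ ν γ : ι → Measure E} (hμ : ∀ i, μ i ≪ γ i) (hν : ∀ i, ν i ≪ γ i) (i : ι) :
    s.piecewise μ ν i ≪ γ i := by
  rw [piecewise]
  split_ifs
  exacts [hμ i, hν i]

theorem volume_absolutelyContinuous_stdGaussian :
    (volume : Measure (RV d)) ≪ stdGaussian d :=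
  pi_absolutelyContinuous fun _ => gaussianReal_absolutelyContinuous' 0 one_ne_zero

variable {d}

section Prefix

theorem measurable_prefixMap_F (t : ℕ) : Measurable[F d t] (prefixMap d t) := by
  refine @measurable_pi_lambda _ _ _ (F d t) _ _ fun s => ?_
  refine (comap_measurable fun ω : Seq d => ω s).mono ?_ le_rfl
  exact le_iSup₂_of_le (f := fun (i : ℕ) (_ : i ∈ range t) =>
    MeasurableSpace.comap (fun ω : Seq d => ω i) inferInstance) s (mem_range.mpr s.2) le_rfl

theorem measurable_prefixMap (t : ℕ) : Measurable (prefixMap d t) :=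
  (measurable_prefixMap_F t).mono ((F d).le t) le_rfl

theorem measurable_Z (μ Γ : Measure (Seq d)) (t : ℕ) : Measurable[F d t] (Z d μ Γ t) :=
  (Measure.measurable_rnDeriv _ _).ennreal_toReal.comp (measurable_prefixMap_F t)

theorem tendstoLocL1_of_eventually_prefixLaw_eq (Γ : Measure (Seq d))
    {μn : ℕ → Measure (Seq d)} {μ : Measure (Seq d)}
    (h : ∀ t, ∀ᶠ n in atTop, prefixLaw d (μn n) t = prefixLaw d μ t) :
    TendstoLocL1 d Γ μn μ := fun t => by
  refine tendsto_const_nhds.congr' ?_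
  filter_upwards [h t] with n hn
  simp [Z, hn]

end Prefix

section ForkConvexHull

theorem subset_fconv (Γ : Measure (Seq d)) (𝔓 : Set (Measure (Seq d))) : 𝔓 ⊆ fconv d Γ 𝔓 :=
  Set.subset_sInter fun _ hS => hS.1

theorem isForkConvex_fconv (Γ : Measure (Seq d)) (𝔓 : Set (Measure (Seq d))) :
    IsForkConvex d Γ (fconv d Γ 𝔓) := fun P hP Q hQ s h R hR S hS =>
  hS.2 P (hP S hS) Q (hQ S hS) s h R hR

end ForkConvexHull

section ProductLaw

variable {μ μ' Γ : Measure (Seq d)} {Ps Ps' γ : ℕ → Measure (RV d)}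

theorem isIIDLaw_iff_isProductLaw {P : Measure (RV d)} :
    IsIIDLaw d μ P ↔ IsProductLaw d μ fun _ => P := .rfl

theorem isGamma_iff_isProductLaw : IsGamma d Γ ↔ IsProductLaw d Γ fun _ => stdGaussian d := .rfl

theorem isProductLaw_infinitePi (Ps : ℕ → Measure (RV d)) [∀ t, IsProbabilityMeasure (Ps t)] :
    IsProductLaw d (Measure.infinitePi Ps) Ps := by
  refine ⟨inferInstance, fun t A _ => ?_⟩
  have hindep : iIndepFun (fun (s : Fin t) (ω : Seq d) => ω s) (Measure.infinitePi Ps) :=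
    (iIndepFun_infinitePi fun _ => measurable_id).precomp Fin.val_injective
  have hmap : (Measure.infinitePi Ps).map (fun ω (s : Fin t) => ω s) =
      Measure.pi fun s : Fin t => Ps s := by
    simpa only [Measure.infinitePi_map_eval] using
      (iIndepFun_iff_map_fun_eq_pi_map fun s : Fin t =>
        (measurable_pi_apply (s : ℕ)).aemeasurable).mp hindep
  rw [prefixLaw, show prefixMap d t = fun ω s => ω s from rfl, hmap, Measure.pi_pi]

theorem IsProductLaw.isProbabilityMeasure_marginal (h : IsProductLaw d μ Ps) (t : ℕ) :
    IsProbabilityMeasure (Ps t) := by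
  have := h.1
  have hmass : ∀ n, ∏ s : Fin n, Ps s Set.univ = 1 := fun n => by
    have : IsProbabilityMeasure (prefixLaw d μ n) :=
      Measure.isProbabilityMeasure_map (measurable_prefixMap n).aemeasurable
    rw [← h.2 n _ fun _ => .univ, Set.pi_univ, measure_univ]
  have hsucc := hmass (t + 1)
  rw [Fin.prod_univ_castSucc] at hsucc
  exact ⟨by simpa [hmass t] using hsucc⟩

theorem IsProductLaw.prefixLaw_eq (h : IsProductLaw d μ Ps) (t : ℕ) :
    prefixLaw d μ t = Measure.pi fun s : Fin t => Ps s := by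
  have := h.isProbabilityMeasure_marginal
  exact (Measure.pi_eq fun A hA => h.2 t A hA).symm

theorem IsProductLaw.prefixLaw_congr (h : IsProductLaw d μ Ps) (h' : IsProductLaw d μ' Ps')
    {t : ℕ} (heq : ∀ s < t, Ps s = Ps' s) : prefixLaw d μ t = prefixLaw d μ' t := by
  rw [h.prefixLaw_eq, h'.prefixLaw_eq]
  congr 1 with s : 1
  exact heq s s.2

theorem IsProductLaw.ae_eval (h : IsProductLaw d μ Ps) {t : ℕ} {p : RV d → Prop}
    (hp : ∀ᵐ x ∂Ps t, p x) : ∀ᵐ ω ∂μ, p (ω t) := by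
  have := h.isProbabilityMeasure_marginal
  have hlast : ∀ᵐ x ∂prefixLaw d μ (t + 1), p (x (Fin.last t)) := by
    rw [h.prefixLaw_eq]
    exact (Measure.quasiMeasurePreserving_eval _ (Fin.last t)).ae hp
  exact ae_of_ae_map (measurable_prefixMap (t + 1)).aemeasurable hlast

theorem IsProductLaw.locAC (h : IsProductLaw d μ Ps) (hΓ : IsProductLaw d Γ γ)
    (hac : ∀ t, Ps t ≪ γ t) : LocAC d μ Γ := fun t => by
  have := h.isProbabilityMeasure_marginal
  have := hΓ.isProbabilityMeasure_marginal
  rw [h.prefixLaw_eq, hΓ.prefixLaw_eq]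
  exact pi_absolutelyContinuous fun i => hac i

theorem IsProductLaw.Z_ae_eq (h : IsProductLaw d μ Ps) (hΓ : IsProductLaw d Γ γ)
    (hac : ∀ t, Ps t ≪ γ t) (t : ℕ) :
    Z d μ Γ t =ᵐ[Γ] fun ω => ∏ s ∈ range t, ((Ps s).rnDeriv (γ s) (ω s)).toReal := by
  have := h.isProbabilityMeasure_marginal
  have := hΓ.isProbabilityMeasure_marginal
  have hrn := rnDeriv_pi fun i : Fin t => hac i
  rw [← h.prefixLaw_eq, ← hΓ.prefixLaw_eq] at hrn
  filter_upwards [ae_of_ae_map (measurable_prefixMap t).aemeasurable hrn] with ω hω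
  rw [Z, hω, ENNReal.toReal_prod, prod_range]
  rfl

theorem IsProductLaw.ae_toReal_rnDeriv_eq_zero_imp (hΓ : IsProductLaw d Γ γ)
    [∀ t, SigmaFinite (Ps t)] [∀ t, SigmaFinite (Ps' t)] (hac : ∀ t, Ps t ≪ Ps' t) :
    ∀ᵐ ω ∂Γ, ∀ t, ((Ps' t).rnDeriv (γ t) (ω t)).toReal = 0 →
      ((Ps t).rnDeriv (γ t) (ω t)).toReal = 0 := by
  have := hΓ.isProbabilityMeasure_marginal
  refine ae_all_iff.mpr fun t => hΓ.ae_eval (t := t) (p := fun x =>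
    ((Ps' t).rnDeriv (γ t) x).toReal = 0 → ((Ps t).rnDeriv (γ t) x).toReal = 0) ?_
  filter_upwards [ae_rnDeriv_eq_zero_of_absolutelyContinuous (γ t) (hac t),
    Measure.rnDeriv_ne_top (Ps' t) (γ t)] with x hzero hfin h0
  rw [hzero (((ENNReal.toReal_eq_zero_iff _).mp h0).resolve_right hfin), ENNReal.toReal_zero]

end ProductLaw

section Switching

variable {Γ P Q R : Measure (Seq d)} {γ ps qs : ℕ → Measure (RV d)} {s : ℕ}

/- The weight keeps `P` exactly where the density of `Q` has vanished by time `s`. Since `ps ≪ qs`,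
the density of `P` vanishes there as well, so no mass escapes the switch. -/
theorem Z_piecewise_ae_eq (hΓ : IsProductLaw d Γ γ) (hP : IsProductLaw d P ps)
    (hQ : IsProductLaw d Q qs) (hR : IsProductLaw d R ((range s).piecewise ps qs))
    (hpq : ∀ t, ps t ≪ qs t) (hqγ : ∀ t, qs t ≪ γ t) {t : ℕ} (hst : s ≤ t) :
    Z d R Γ t =ᵐ[Γ] fun ω =>
      (if Z d Q Γ s ω = 0 then 1 else 0) * Z d P Γ t ω +
        (1 - if Z d Q Γ s ω = 0 then 1 else 0) * Z d Q Γ t ω * (Z d P Γ s ω / Z d Q Γ s ω) := by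
  have := hP.isProbabilityMeasure_marginal
  have := hQ.isProbabilityMeasure_marginal
  have hpγ : ∀ t, ps t ≪ γ t := fun t => (hpq t).trans (hqγ t)
  have hrγ : ∀ t, (range s).piecewise ps qs t ≪ γ t := piecewise_absolutelyContinuous _ hpγ hqγ
  filter_upwards [hR.Z_ae_eq hΓ hrγ t, hP.Z_ae_eq hΓ hpγ t, hP.Z_ae_eq hΓ hpγ s,
    hQ.Z_ae_eq hΓ hqγ t, hQ.Z_ae_eq hΓ hqγ s, hΓ.ae_toReal_rnDeriv_eq_zero_imp hpq]
    with ω hRt hPt hPs hQt hQs hzero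
  rw [hRt, hPt, hPs, hQt, hQs, ← prod_piecewise_eq_fork (range_mono hst) fun i _ => hzero i]
  refine prod_congr rfl fun j _ => ?_
  simp only [piecewise, apply_ite (fun ν : Measure (RV d) => (ν.rnDeriv (γ j) (ω j)).toReal)]

theorem isFCC_piecewise (hΓ : IsProductLaw d Γ γ) (hP : IsProductLaw d P ps)
    (hQ : IsProductLaw d Q qs) (hR : IsProductLaw d R ((range s).piecewise ps qs))
    (hpq : ∀ t, ps t ≪ qs t) (hqγ : ∀ t, qs t ≪ γ t) :
    IsFCC d Γ P Q s (fun ω => if Z d Q Γ s ω = 0 then 1 else 0) R := by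
  have hpγ : ∀ t, ps t ≪ γ t := fun t => (hpq t).trans (hqγ t)
  have hrγ : ∀ t, (range s).piecewise ps qs t ≪ γ t := piecewise_absolutelyContinuous _ hpγ hqγ
  refine ⟨hP.1, hQ.1, hP.locAC hΓ hpγ, hQ.locAC hΓ hqγ,
    .ite (measurable_Z Q Γ s (measurableSet_singleton 0)) measurable_const measurable_const,
    fun ω => ?_, ?_, hR.1, hR.locAC hΓ hrγ, fun t => ?_⟩
  · dsimp only
    split_ifs <;> simp
  · convert measure_empty (μ := Γ)
    grind
  · by_cases hts : t ≤ s
    · have hRP : prefixLaw d R t = prefixLaw d P t := hR.prefixLaw_congr hP fun j hj =>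
        piecewise_eq_of_mem _ _ _ (mem_range.mpr (hj.trans_le hts))
      simp only [if_pos hts, Z, hRP]
      rfl
    · simp only [if_neg hts]
      exact Z_piecewise_ae_eq hΓ hP hQ hR hpq hqγ (not_le.mp hts).le

end Switching

theorem piecewise_range_succ_min {α : Type*} (u : ℕ → α) (n : ℕ) :
    (range (n + 1)).piecewise (fun t => u (min t n)) (fun _ => u (n + 1)) =
      fun t => u (min t (n + 1)) := by
  funext t
  grind [piecewise]

theorem mem_fconv_of_isProductLaw_min {Γ : Measure (Seq d)} {γ : ℕ → Measure (RV d)}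
    (hΓ : IsProductLaw d Γ γ) {PP : Set (Measure (RV d))} (hac : ∀ P ∈ PP, ∀ t, P ≪ γ t)
    (hmac : ∀ P ∈ PP, ∀ Q ∈ PP, P ≪ Q) {Ps : ℕ → Measure (RV d)} (hPs : ∀ t, Ps t ∈ PP)
    [∀ t, IsProbabilityMeasure (Ps t)] (n : ℕ) {μ : Measure (Seq d)}
    (hμ : IsProductLaw d μ fun t => Ps (min t n)) : μ ∈ fconv d Γ (iidLaws d PP) := by
  induction n generalizing μ with
  | zero =>
    simp only [Nat.min_zero] at hμ
    exact subset_fconv _ _ ⟨Ps 0, hPs 0, isIIDLaw_iff_isProductLaw.mpr hμ⟩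
  | succ n ih =>
    have hP := isProductLaw_infinitePi fun t => Ps (min t n)
    have hQ := isProductLaw_infinitePi fun _ => Ps (n + 1)
    have hQ_mem := subset_fconv Γ (iidLaws d PP)
      ⟨_, hPs (n + 1), isIIDLaw_iff_isProductLaw.mpr hQ⟩
    rw [← piecewise_range_succ_min] at hμ
    exact isForkConvex_fconv _ _ _ (ih hP) _ hQ_mem _ _ _ <|
      isFCC_piecewise hΓ hP hQ hμ (fun _ => hmac _ (hPs _) _ (hPs _)) fun t => hac _ (hPs _) t

variable (d)

theorem statement5_general (Γ : Measure (Seq d)) (γ : ℕ → Measure (RV d))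
    (hΓ : IsProductLaw d Γ γ) (PP : Set (Measure (RV d))) (hac : ∀ P ∈ PP, ∀ t, P ≪ γ t)
    (hmac : ∀ P ∈ PP, ∀ Q ∈ PP, P ≪ Q) :
    productLaws d PP ⊆ clfconv d Γ (iidLaws d PP) ∧ iidLaws d PP ⊆ productLaws d PP := by
  refine ⟨?_, fun μ ⟨P, hP, hμ⟩ => ⟨fun _ => P, fun _ => hP, isIIDLaw_iff_isProductLaw.mp hμ⟩⟩
  rintro μ ⟨Ps, hPs, hμ⟩
  have := hμ.isProbabilityMeasure_marginal
  have htrunc := fun n => isProductLaw_infinitePi fun t => Ps (min t n)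
  refine ⟨hμ.1, hμ.locAC hΓ fun t => hac _ (hPs t) t, _,
    fun n => mem_fconv_of_isProductLaw_min hΓ hac hmac hPs n (htrunc n),
    tendstoLocL1_of_eventually_prefixLaw_eq Γ fun t => ?_⟩
  filter_upwards [eventually_ge_atTop t] with n hn
  exact (htrunc n).prefixLaw_congr hμ fun s hs => by rw [min_eq_left (hs.le.trans hn)]

/-- For a mutually absolutely continuous family `PP` of laws with Lebesgue
densities, the closed fork-convex hull of the i.i.d. laws `PP^∞` contains all
independent-product laws over `PP`, which in turn contain `PP^∞`. -/
theorem statement5 (Γ : Measure (Seq d)) (hΓ : IsGamma d Γ)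
    (PP : Set (Measure (RV d)))
    (hdens : ∀ P ∈ PP, IsProbabilityMeasure P ∧ P ≪ (volume : Measure (RV d)))
    (hmac : ∀ P ∈ PP, ∀ Q ∈ PP, P ≪ Q) :
    productLaws d PP ⊆ clfconv d Γ (iidLaws d PP) ∧
    iidLaws d PP ⊆ productLaws d PP :=
  statement5_general d Γ _ (isGamma_iff_isProductLaw.mp hΓ) PP
    (fun P hP _ => (hdens P hP).2.trans (volume_absolutelyContinuous_stdGaussian d)) hmac

end SeqTest
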